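/- Let q > 2, Λ ≥ 1, and let u : ℝ/ℤ → ℝⁿ be an embedded, regular C¹ curve with bil(u) < ∞, [u']_{W^{1-1/q,q}} < ∞, and 1/Λ ≤ |u'(x)| ≤ Λ for all x ∈ ℝ/ℤ. Then the classical tangent-point functional TP_cl and the variant TP satisfy |TP_cl(u) − TP(u)| ≤ (bil u)^{2q} · Λ^{2q} · [u']_{W^{1-1/q,q}}^q · (Λ − 1). -/

import Mathlib

open MeasureTheory Set Filter
open scoped RealInnerProductSpace ENNReal Topology

noncomputable section

/-- The distance on the circle `ℝ/ℤ` between the points represented by `x` and `y`. -/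
def circDist (x y : ℝ) : ℝ := ‖((x - y : ℝ) : AddCircle (1 : ℝ))‖

/-- The representative of `z` modulo `1` lying in `(-1/2, 1/2]`. -/
def wrap (z : ℝ) : ℝ := 1 / 2 - Int.fract (1 / 2 - z)

/-- Squared wedge norm `|a ∧ b|² = |a|²|b|² - ⟨a,b⟩²`. -/
def wedgeSq {n : ℕ} (a b : EuclideanSpace ℝ (Fin n)) : ℝ :=
  ‖a‖ ^ 2 * ‖b‖ ^ 2 - ⟪a, b⟫ ^ 2

/-- Wedge inner product `⟨a∧b, c∧d⟩ = ⟨a,c⟩⟨b,d⟩ - ⟨a,d⟩⟨b,c⟩`. -/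
def wedgeInner {n : ℕ} (a b c d : EuclideanSpace ℝ (Fin n)) : ℝ :=
  ⟪a, c⟫ * ⟪b, d⟫ - ⟪a, d⟫ * ⟪b, c⟫

/-- Fundamental domain for double integrals over `(ℝ/ℤ)²`. -/
def unitSq : Set (ℝ × ℝ) := Ioc (0 : ℝ) 1 ×ˢ Ioc (0 : ℝ) 1

/-- The tangent-point functional `TP` (extended-real-valued). -/
def TPe {n : ℕ} (q : ℝ) (u : ℝ → EuclideanSpace ℝ (Fin n)) : ℝ≥0∞ :=
  ENNReal.ofReal (1 / q) *
    ∫⁻ p in unitSq, ENNReal.ofReal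
      (wedgeSq (deriv u p.2) (u p.1 - u p.2) ^ (q / 2) / ‖u p.1 - u p.2‖ ^ (2 * q))

/-- The tangent-point functional `TP` (real-valued). -/
def TPr {n : ℕ} (q : ℝ) (u : ℝ → EuclideanSpace ℝ (Fin n)) : ℝ := (TPe q u).toReal

/-- The `q`-th power of the Sobolev–Slobodeckii seminorm `[f]_{W^{s,q}}` on `ℝ/ℤ`. -/
def sobSemPow {n : ℕ} (s q : ℝ) (f : ℝ → EuclideanSpace ℝ (Fin n)) : ℝ≥0∞ :=
  ∫⁻ p in unitSq, ENNReal.ofReal (‖f p.1 - f p.2‖ ^ q / circDist p.1 p.2 ^ (1 + s * q))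

/-- The `W^{s,q}`-norm `‖f‖_{L^q} + [f]_{W^{s,q}}`. -/
def Wnorm {n : ℕ} (s q : ℝ) (f : ℝ → EuclideanSpace ℝ (Fin n)) : ℝ :=
  (∫ x in Ioc (0 : ℝ) 1, ‖f x‖ ^ q) ^ (1 / q) + (sobSemPow s q f).toReal ^ (1 / q)

/-- The bi-Lipschitz constant `bil(u) = sup_{x ≢ y} |x-y|_{ℝ/ℤ}/|u(x)-u(y)|`. -/
def bil {n : ℕ} (u : ℝ → EuclideanSpace ℝ (Fin n)) : ℝ≥0∞ :=
  ⨆ (x : ℝ) (y : ℝ) (_ : circDist x y ≠ 0),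
    ENNReal.ofReal (circDist x y) / ENNReal.ofReal ‖u x - u y‖

/-- The `L^∞`-norm of the derivative of `u`. -/
def linfD {n : ℕ} (u : ℝ → EuclideanSpace ℝ (Fin n)) : ℝ≥0∞ :=
  ⨆ x : ℝ, (‖deriv u x‖₊ : ℝ≥0∞)

/-- A periodic curve is embedded if it is injective on the circle `ℝ/ℤ`. -/
def Embedded {n : ℕ} (u : ℝ → EuclideanSpace ℝ (Fin n)) : Prop :=
  ∀ x y : ℝ, u x = u y → ((x : AddCircle (1 : ℝ)) = (y : AddCircle (1 : ℝ)))

/-- A curve is regular if `min_{ℝ/ℤ} |u'| > 0`. -/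
def Regular {n : ℕ} (u : ℝ → EuclideanSpace ℝ (Fin n)) : Prop :=
  0 < ⨅ x : ℝ, ‖deriv u x‖

/-- Orthogonal projection of `b` onto the orthogonal complement of `ℝ a`. -/
def projPerp {n : ℕ} (a b : EuclideanSpace ℝ (Fin n)) : EuclideanSpace ℝ (Fin n) :=
  b - (⟪b, a⟫ / ‖a‖ ^ 2) • a

/-- The classical tangent-point functional (extended-real-valued). -/
def TPcle {n : ℕ} (q : ℝ) (u : ℝ → EuclideanSpace ℝ (Fin n)) : ℝ≥0∞ :=
  ENNReal.ofReal (1 / q) *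
    ∫⁻ p in unitSq, ENNReal.ofReal
      (‖projPerp (deriv u p.2) (u p.1 - u p.2)‖ ^ q / ‖u p.1 - u p.2‖ ^ (2 * q) *
        (‖deriv u p.1‖ * ‖deriv u p.2‖))

/-- The integrand of the functional `M(u; v, w)`. -/
def Mintegrand {n : ℕ} (q : ℝ) (u v w : ℝ → EuclideanSpace ℝ (Fin n)) (p : ℝ × ℝ) : ℝ :=
  wedgeSq (deriv u p.2) (u p.1 - u p.2) ^ ((q - 2) / 2) / ‖u p.1 - u p.2‖ ^ (2 * q) *
    wedgeInner (deriv u p.2) (u p.1 - u p.2) (deriv v p.2)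
      (w p.1 - w p.2 - wrap (p.1 - p.2) • deriv w p.2)

/-- The functional `M(u; v, w)` appearing in the first variation of `TP`. -/
def Mfun {n : ℕ} (q : ℝ) (u v w : ℝ → EuclideanSpace ℝ (Fin n)) : ℝ :=
  ∫ p in unitSq, Mintegrand q u v w p

/-- The integrand of the functional `A(u; v, w)`. -/
def Aintegrand {n : ℕ} (q : ℝ) (u v w : ℝ → EuclideanSpace ℝ (Fin n)) (p : ℝ × ℝ) : ℝ :=
  wedgeSq (deriv u p.2) (u p.1 - u p.2) ^ (q / 2) / ‖u p.1 - u p.2‖ ^ (2 * q + 2) *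
    ⟪v p.1 - v p.2, w p.1 - w p.2⟫

/-- The functional `A(u; v, w)` appearing in the first variation of `TP`. -/
def Afun {n : ℕ} (q : ℝ) (u v w : ℝ → EuclideanSpace ℝ (Fin n)) : ℝ :=
  ∫ p in unitSq, Aintegrand q u v w p

/-- The first variation `δTP(u)[w] = M(u;u,w) + M(u;w,u) - 2A(u;u,w)`. -/
def deltaTP {n : ℕ} (q : ℝ) (u w : ℝ → EuclideanSpace ℝ (Fin n)) : ℝ :=
  Mfun q u u w + Mfun q u w u - 2 * Afun q u u w

/-- The `H²` inner product on periodic curves. -/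
def H2inner (v w : ℝ → EuclideanSpace ℝ (Fin 3)) : ℝ :=
  ∫ x in Ioc (0 : ℝ) 1,
    (⟪v x, w x⟫ + ⟪deriv v x, deriv w x⟫ + ⟪deriv (deriv v) x, deriv (deriv w) x⟫)

/-- The total energy `E(u) = (κ/2)∫|u''|² + ρ TP(u)`. -/
def energyE (κ ρ q : ℝ) (u : ℝ → EuclideanSpace ℝ (Fin 3)) : ℝ :=
  κ / 2 * (∫ x in Ioc (0 : ℝ) 1, ‖deriv (deriv u) x‖ ^ 2) + ρ * TPr q u

/-!
Taylor's formula with Jensen's inequality bounds the `q`-th power of the remainder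
`u(y + h) - u(y) - h u'(y)` by `|h|^q` times the mean over `t ∈ (0, 1]` of
`|u'(y + th) - u'(y)|^q`. After division by `|h|^{2q}`, the substitution `h ↦ th` costs a
factor `t⁻¹`, which is absorbed by the factor `t^q` that the change of denominator produces, so
integration in `h` yields the Sobolev–Slobodeckii density of `u'`. As `|a ∧ b| ≤ |a| |b - c a|`
for every scalar `c`, this gives `q TP(u) ≤ (bil u)^{2q} Λ^q [u']^q`.

The two integrands differ by the factor `|u'(x)| |u'(y)|^{1-q} ∈ [Λ^{-q}, Λ^q]`, whence
`|TP_cl(u) - TP(u)| ≤ (Λ^q - 1) TP(u)`, and Bernoulli's inequality turns `Λ^q - 1` into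
`q Λ^{q-1} (Λ - 1)`.
-/

section Inequalities

lemma rpow_sub_one_le_mul_sub_one {q x : ℝ} (hq : 1 ≤ q) (hx : 0 < x) :
    x ^ q - 1 ≤ q * x ^ (q - 1) * (x - 1) := by
  have bernoulli : 1 + q * (x⁻¹ - 1) ≤ (x⁻¹) ^ q := by
    simpa using one_add_mul_self_le_rpow_one_add (by linarith [inv_pos.2 hx] : -1 ≤ x⁻¹ - 1) hq
  calc x ^ q - 1 = x ^ q * (1 - x⁻¹ ^ q) := by
        rw [Real.inv_rpow hx.le, mul_sub, mul_inv_cancel₀ (by positivity), mul_one]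
    _ ≤ x ^ q * (q * (1 - x⁻¹)) := by gcongr; linarith
    _ = q * x ^ (q - 1) * (x - 1) := by
        rw [Real.rpow_sub_one hx.ne']
        field_simp

lemma mul_rpow_one_sub_mem_Icc {q Λ a b : ℝ} (hq : 1 ≤ q) (hΛ : 0 < Λ)
    (ha : a ∈ Icc (1 / Λ) Λ) (hb : b ∈ Icc (1 / Λ) Λ) :
    a * b ^ (1 - q) ∈ Icc (Λ ^ q)⁻¹ (Λ ^ q) := by
  have hb₀ : 0 < b := (one_div_pos.2 hΛ).trans_le hb.1
  have lower : Λ ^ (1 - q) ≤ b ^ (1 - q) := Real.rpow_le_rpow_of_nonpos hb₀ hb.2 (by linarith)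
  have upper : b ^ (1 - q) ≤ Λ ^ (q - 1) := by
    calc b ^ (1 - q) ≤ (1 / Λ) ^ (1 - q) :=
          Real.rpow_le_rpow_of_nonpos (one_div_pos.2 hΛ) hb.1 (by linarith)
      _ = Λ ^ (q - 1) := by rw [one_div, Real.inv_rpow hΛ.le, ← Real.rpow_neg hΛ.le, neg_sub]
  constructor
  · calc (Λ ^ q)⁻¹ = 1 / Λ * Λ ^ (1 - q) := by
          rw [Real.rpow_sub hΛ, Real.rpow_one]
          field_simp
      _ ≤ a * b ^ (1 - q) := by gcongr; exacts [(one_div_pos.2 hΛ).le.trans ha.1, ha.1]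
  · calc a * b ^ (1 - q) ≤ Λ * Λ ^ (q - 1) := by gcongr; exact ha.2
      _ = Λ ^ q := by
          rw [Real.rpow_sub_one hΛ.ne']
          field_simp

lemma abs_toReal_sub_toReal_le {a b : ℝ≥0∞} {c : ℝ} (hc : 1 ≤ c) (ha : a ≠ ⊤) (hb : b ≠ ⊤)
    (hab : a ≤ ENNReal.ofReal c * b) (hba : b ≤ ENNReal.ofReal c * a) :
    |a.toReal - b.toReal| ≤ (c - 1) * b.toReal := by
  have hc₀ : 0 ≤ c := zero_le_one.trans hc
  have hab' : a.toReal ≤ c * b.toReal := by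
    simpa [hc₀] using ENNReal.toReal_mono (ENNReal.mul_ne_top ENNReal.ofReal_ne_top hb) hab
  have hba' : b.toReal ≤ c * a.toReal := by
    simpa [hc₀] using ENNReal.toReal_mono (ENNReal.mul_ne_top ENNReal.ofReal_ne_top ha) hba
  rw [abs_le]
  constructor <;> nlinarith

end Inequalities

section Integrals

lemma setLIntegral_Ioc_comp_add_left_eq_of_periodic {f : ℝ → ℝ≥0∞} {T : ℝ} (hT : 0 < T)
    (hf : Function.Periodic f T) (a b c : ℝ) :
    ∫⁻ x in Ioc a (a + T), f (c + x) = ∫⁻ x in Ioc b (b + T), f x := by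
  rw [(measurePreserving_add_left volume c).setLIntegral_comp_emb
    (measurableEmbedding_addLeft c) f, image_const_add_Ioc, ← add_assoc]
  refine (isAddFundamentalDomain_Ioc hT (c + a)).setLIntegral_eq
    (isAddFundamentalDomain_Ioc hT b) f ?_
  rintro ⟨_, k, rfl⟩ x
  exact (congrArg f (add_comm _ _)).trans (hf.zsmul k x)

lemma lintegral_unitSq_eq_lintegral_centered {F : ℝ → ℝ → ℝ≥0∞}
    (hF : Measurable (Function.uncurry F)) (hper : ∀ y, Function.Periodic (F · y) 1) :
    ∫⁻ p in unitSq, F p.1 p.2 =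
      ∫⁻ y in Ioc (0 : ℝ) 1, ∫⁻ h in Ioc (-(1 / 2) : ℝ) (1 / 2), F (y + h) y := by
  rw [unitSq, Measure.volume_eq_prod, ← Measure.prod_restrict,
    lintegral_prod_symm' (fun p => F p.1 p.2) hF]
  refine lintegral_congr fun y => ?_
  have hendpoint : -(1 / 2) + 1 = (1 / 2 : ℝ) := by norm_num
  simpa only [hendpoint, zero_add] using
    (setLIntegral_Ioc_comp_add_left_eq_of_periodic one_pos (hper y) (-(1 / 2)) 0 y).symm

lemma setLIntegral_mul_comp_mul_left_le {s : Set ℝ} (hs : MeasurableSet s)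
    (hstar : StarConvex ℝ 0 s) (G : ℝ → ℝ≥0∞) {t : ℝ} (ht : t ∈ Ioc (0 : ℝ) 1) :
    ∫⁻ h in s, ENNReal.ofReal t * G (t * h) ≤ ∫⁻ h in s, G h := by
  have himage : (t * ·) '' s ⊆ s := by
    rintro _ ⟨h, hh, rfl⟩
    exact starConvex_zero_iff.1 hstar hh ht.1.le ht.2
  calc ∫⁻ h in s, ENNReal.ofReal t * G (t * h) = ∫⁻ h in (t * ·) '' s, G h := by
        rw [lintegral_image_eq_lintegral_abs_deriv_mul hs
          (fun h _ => (hasDerivAt_const_mul t).hasDerivWithinAt)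
          (mul_right_injective₀ ht.1.ne').injOn]
        simp [abs_of_pos ht.1]
    _ ≤ ∫⁻ h in s, G h := lintegral_mono_set himage

lemma lintegral_ofReal_le_ofReal_mul {α : Type*} [MeasurableSpace α] {μ : Measure α}
    {f g : α → ℝ} {c : ℝ} (hc : 0 ≤ c) (hfg : ∀ᵐ x ∂μ, f x ≤ c * g x) :
    ∫⁻ x, ENNReal.ofReal (f x) ∂μ ≤ ENNReal.ofReal c * ∫⁻ x, ENNReal.ofReal (g x) ∂μ := by
  rw [← lintegral_const_mul' _ _ ENNReal.ofReal_ne_top]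
  refine lintegral_mono_ae (hfg.mono fun x hx => ?_)
  rw [← ENNReal.ofReal_mul hc]
  exact ENNReal.ofReal_le_ofReal hx

lemma norm_integral_rpow_le {α E : Type*} [MeasurableSpace α] {μ : Measure α}
    [IsProbabilityMeasure μ] [NormedAddCommGroup E] [NormedSpace ℝ E] {f : α → E} {q : ℝ}
    (hq : 1 ≤ q) (hf : Integrable f μ) (hfq : Integrable (fun x => ‖f x‖ ^ q) μ) :
    ‖∫ x, f x ∂μ‖ ^ q ≤ ∫ x, ‖f x‖ ^ q ∂μ :=
  calc ‖∫ x, f x ∂μ‖ ^ q ≤ (∫ x, ‖f x‖ ∂μ) ^ q :=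
        Real.rpow_le_rpow (norm_nonneg _) (norm_integral_le_integral_norm f) (by linarith)
    _ ≤ ∫ x, ‖f x‖ ^ q ∂μ :=
        (convexOn_rpow hq).map_integral_le
          (Real.continuous_rpow_const (by linarith)).continuousOn isClosed_Ici
          (ae_of_all _ fun _ => norm_nonneg _) hf.norm hfq

end Integrals

section Taylor

variable {E : Type*} [NormedAddCommGroup E] [NormedSpace ℝ E] {u : ℝ → E} {q : ℝ}

lemma periodic_deriv {c : ℝ} (hper : Function.Periodic u c) : Function.Periodic (deriv u) c :=
  fun x => by rw [← deriv_comp_add_const, funext hper]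

variable [CompleteSpace E]

lemma sub_sub_smul_deriv_eq_smul_integral (hu : ContDiff ℝ 1 u) (y h : ℝ) :
    u (y + h) - u y - h • deriv u y =
      h • ∫ t in Ioc (0 : ℝ) 1, (deriv u (y + t * h) - deriv u y) := by
  have : Continuous (deriv u) := hu.continuous_deriv le_rfl
  have hderiv (x : ℝ) : HasDerivAt (fun x => u x - x • deriv u y) (deriv u x - deriv u y) x := by
    simpa using (hu.differentiable one_ne_zero x).hasDerivAt.fun_sub
      ((hasDerivAt_id x).smul_const (deriv u y))
  have ftc := intervalIntegral.integral_unitInterval_deriv_eq_sub (𝕜 := ℝ) (z₀ := y) (z₁ := h)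
    (f' := fun x => deriv u x - deriv u y) (Continuous.continuousOn (by fun_prop))
    fun t _ => hderiv (y + t • h)
  simp only [smul_eq_mul, intervalIntegral.integral_of_le zero_le_one] at ftc
  rw [ftc, add_smul]
  abel

lemma norm_sub_sub_smul_deriv_rpow_le (hu : ContDiff ℝ 1 u) (hq : 1 ≤ q) (y h : ℝ) :
    ‖u (y + h) - u y - h • deriv u y‖ ^ q ≤
      |h| ^ q * ∫ t in Ioc (0 : ℝ) 1, ‖deriv u (y + t * h) - deriv u y‖ ^ q := by
  have : Continuous (deriv u) := hu.continuous_deriv le_rfl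
  have : IsProbabilityMeasure (volume.restrict (Ioc (0 : ℝ) 1)) := ⟨by simp⟩
  rw [sub_sub_smul_deriv_eq_smul_integral hu, norm_smul, Real.norm_eq_abs,
    Real.mul_rpow (abs_nonneg _) (norm_nonneg _)]
  gcongr
  refine norm_integral_rpow_le hq (Continuous.integrableOn_Ioc (by fun_prop))
    (Continuous.integrableOn_Ioc ?_)
  exact Continuous.rpow_const (by fun_prop) fun _ => Or.inr (by linarith)

lemma ofReal_taylor_remainder_div_le (hu : ContDiff ℝ 1 u) (hq : 1 ≤ q) (y h : ℝ) :
    ENNReal.ofReal (‖u (y + h) - u y - h • deriv u y‖ ^ q / |h| ^ (2 * q)) ≤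
      ∫⁻ t in Ioc (0 : ℝ) 1, ENNReal.ofReal t *
        ENNReal.ofReal (‖deriv u (y + t * h) - deriv u y‖ ^ q / |t * h| ^ q) := by
  have : Continuous (deriv u) := hu.continuous_deriv le_rfl
  have hcont : Continuous fun t : ℝ => ‖deriv u (y + t * h) - deriv u y‖ ^ q / |h| ^ q :=
    (Continuous.rpow_const (by fun_prop) fun _ => Or.inr (by linarith)).div_const _
  have hmean : ‖u (y + h) - u y - h • deriv u y‖ ^ q / |h| ^ (2 * q) ≤
      ∫ t in Ioc (0 : ℝ) 1, ‖deriv u (y + t * h) - deriv u y‖ ^ q / |h| ^ q := by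
    rcases eq_or_ne h 0 with rfl | h₀
    · simp [Real.zero_rpow (by linarith : q ≠ 0)]
    have hh : 0 < |h| := abs_pos.2 h₀
    rw [integral_div, two_mul, Real.rpow_add hh, ← div_div]
    gcongr
    rw [div_le_iff₀' (by positivity)]
    exact norm_sub_sub_smul_deriv_rpow_le hu hq y h
  refine (ENNReal.ofReal_le_ofReal hmean).trans ?_
  rw [ofReal_integral_eq_lintegral_ofReal hcont.integrableOn_Ioc
    (ae_of_all _ fun _ => by positivity)]
  refine setLIntegral_mono' measurableSet_Ioc fun t ht => ?_
  have htq : t ^ q ≤ t := Real.rpow_le_self_of_le_one ht.1.le ht.2 hq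
  have ht₀ : 0 < t ^ q := Real.rpow_pos_of_pos ht.1 q
  rw [← ENNReal.ofReal_mul ht.1.le]
  refine ENNReal.ofReal_le_ofReal ?_
  calc ‖deriv u (y + t * h) - deriv u y‖ ^ q / |h| ^ q
      = t ^ q * (‖deriv u (y + t * h) - deriv u y‖ ^ q / |t * h| ^ q) := by
        rw [abs_mul, abs_of_pos ht.1, Real.mul_rpow ht.1.le (abs_nonneg h)]
        field_simp
    _ ≤ t * (‖deriv u (y + t * h) - deriv u y‖ ^ q / |t * h| ^ q) := by gcongr

lemma setLIntegral_taylor_remainder_div_le (hu : ContDiff ℝ 1 u) (hq : 1 ≤ q) (y : ℝ)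
    {s : Set ℝ} (hs : MeasurableSet s) (hstar : StarConvex ℝ 0 s) :
    ∫⁻ h in s, ENNReal.ofReal (‖u (y + h) - u y - h • deriv u y‖ ^ q / |h| ^ (2 * q)) ≤
      ∫⁻ h in s, ENNReal.ofReal (‖deriv u (y + h) - deriv u y‖ ^ q / |h| ^ q) := by
  have : Continuous (deriv u) := hu.continuous_deriv le_rfl
  set G : ℝ → ℝ≥0∞ := fun h => ENNReal.ofReal (‖deriv u (y + h) - deriv u y‖ ^ q / |h| ^ q)
  have hG : Measurable G := by
    have : Measurable fun h => ‖deriv u (y + h) - deriv u y‖ := Continuous.measurable (by fun_prop)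
    fun_prop
  calc ∫⁻ h in s, ENNReal.ofReal (‖u (y + h) - u y - h • deriv u y‖ ^ q / |h| ^ (2 * q))
      ≤ ∫⁻ h in s, ∫⁻ t in Ioc (0 : ℝ) 1, ENNReal.ofReal t * G (t * h) :=
        lintegral_mono fun h => ofReal_taylor_remainder_div_le hu hq y h
    _ = ∫⁻ t in Ioc (0 : ℝ) 1, ∫⁻ h in s, ENNReal.ofReal t * G (t * h) :=
        lintegral_lintegral_swap (Measurable.aemeasurable (by fun_prop))
    _ ≤ ∫⁻ _ in Ioc (0 : ℝ) 1, ∫⁻ h in s, G h :=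
        setLIntegral_mono' measurableSet_Ioc fun _ ht =>
          setLIntegral_mul_comp_mul_left_le hs hstar G ht
    _ = ∫⁻ h in s, G h := by simp

end Taylor

section Wedge

variable {n : ℕ} (a b : EuclideanSpace ℝ (Fin n))

lemma inner_projPerp_left : ⟪projPerp a b, a⟫ = 0 := by
  rcases eq_or_ne a 0 with rfl | ha
  · exact inner_zero_right _
  rw [projPerp, inner_sub_left, real_inner_smul_left, real_inner_self_eq_norm_sq,
    div_mul_cancel₀ _ (pow_ne_zero 2 (norm_ne_zero_iff.2 ha)), sub_self]

lemma norm_projPerp_le (c : ℝ) : ‖projPerp a b‖ ≤ ‖b - c • a‖ := by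
  have hsplit : b - c • a = projPerp a b + (⟪b, a⟫ / ‖a‖ ^ 2 - c) • a := by
    rw [projPerp, sub_smul]
    abel
  have pythagoras := norm_add_sq_eq_norm_sq_add_norm_sq_real
    (x := projPerp a b) (y := (⟪b, a⟫ / ‖a‖ ^ 2 - c) • a)
    (by rw [inner_smul_right, inner_projPerp_left, mul_zero])
  rw [hsplit, mul_self_le_mul_self_iff (norm_nonneg _) (norm_nonneg _), pythagoras]
  exact le_add_of_nonneg_right (mul_self_nonneg _)

lemma wedgeSq_eq_sq : wedgeSq a b = (‖a‖ * ‖projPerp a b‖) ^ 2 := by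
  rcases eq_or_ne a 0 with rfl | ha
  · simp [wedgeSq]
  have ha₀ : ‖a‖ ≠ 0 := norm_ne_zero_iff.2 ha
  rw [mul_pow, projPerp, norm_sub_sq_real, norm_smul, inner_smul_right, wedgeSq, mul_pow,
    Real.norm_eq_abs, sq_abs, real_inner_comm]
  field_simp
  ring

lemma wedgeSq_rpow_half (q : ℝ) : wedgeSq a b ^ (q / 2) = (‖a‖ * ‖projPerp a b‖) ^ q := by
  rw [wedgeSq_eq_sq, ← Real.rpow_natCast, ← Real.rpow_mul (by positivity)]
  congr 1
  push_cast
  ring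

end Wedge

section Circle

lemma continuous_circDist : Continuous fun p : ℝ × ℝ => circDist p.1 p.2 :=
  continuous_norm.comp ((AddCircle.continuous_mk' 1).comp (continuous_fst.sub continuous_snd))

lemma periodic_circDist (y : ℝ) : Function.Periodic (circDist · y) 1 := fun x => by
  simp only [circDist, add_sub_right_comm, AddCircle.coe_add_period]

lemma circDist_add_left {y h : ℝ} (hh : h ∈ Ioc (-(1 / 2) : ℝ) (1 / 2)) :
    circDist (y + h) y = |h| := by
  rw [circDist, add_sub_cancel_left, AddCircle.norm_coe_eq_abs_iff _ one_ne_zero, abs_one, abs_le]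
  exact ⟨hh.1.le, hh.2⟩

variable {n : ℕ}

lemma sobSemPow_eq_lintegral_centered (s q : ℝ) {f : ℝ → EuclideanSpace ℝ (Fin n)}
    (hf : Measurable f) (hper : Function.Periodic f 1) :
    sobSemPow s q f = ∫⁻ y in Ioc (0 : ℝ) 1, ∫⁻ h in Ioc (-(1 / 2) : ℝ) (1 / 2),
      ENNReal.ofReal (‖f (y + h) - f y‖ ^ q / |h| ^ (1 + s * q)) := by
  have hmeas : Measurable fun p : ℝ × ℝ =>
      ENNReal.ofReal (‖f p.1 - f p.2‖ ^ q / circDist p.1 p.2 ^ (1 + s * q)) := by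
    have := continuous_circDist.measurable
    fun_prop
  rw [sobSemPow, lintegral_unitSq_eq_lintegral_centered (F := fun x y =>
    ENNReal.ofReal (‖f x - f y‖ ^ q / circDist x y ^ (1 + s * q))) hmeas
    fun y x => by simp only [hper x, periodic_circDist y x]]
  refine lintegral_congr fun y => setLIntegral_congr_fun measurableSet_Ioc fun h hh => ?_
  simp only [circDist_add_left hh]

lemma circDist_div_norm_sub_le_bil {u : ℝ → EuclideanSpace ℝ (Fin n)} (hbil : bil u < ⊤)
    {x y : ℝ} (hxy : circDist x y ≠ 0) : circDist x y / ‖u x - u y‖ ≤ (bil u).toReal := by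
  have hle : ENNReal.ofReal (circDist x y) / ENNReal.ofReal ‖u x - u y‖ ≤ bil u :=
    le_iSup_of_le x (le_iSup_of_le y (le_iSup_of_le hxy le_rfl))
  have hr : 0 ≤ circDist x y := norm_nonneg _
  simpa [ENNReal.toReal_div, hr] using ENNReal.toReal_mono hbil.ne hle

end Circle

section TangentPoint

variable {n : ℕ} {u : ℝ → EuclideanSpace ℝ (Fin n)} {q Λ : ℝ}

/-- The integrand of the functional `TP` at the parameters `(x, y)`. -/
def tpDensity (q : ℝ) (u : ℝ → EuclideanSpace ℝ (Fin n)) (x y : ℝ) : ℝ :=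
  wedgeSq (deriv u y) (u x - u y) ^ (q / 2) / ‖u x - u y‖ ^ (2 * q)

/-- The integrand of the classical functional `TP_cl` at the parameters `(x, y)`. -/
def tpClassicalDensity (q : ℝ) (u : ℝ → EuclideanSpace ℝ (Fin n)) (x y : ℝ) : ℝ :=
  ‖projPerp (deriv u y) (u x - u y)‖ ^ q / ‖u x - u y‖ ^ (2 * q) * (‖deriv u x‖ * ‖deriv u y‖)

lemma TPe_eq_lintegral_tpDensity (q : ℝ) (u : ℝ → EuclideanSpace ℝ (Fin n)) :
    TPe q u = ENNReal.ofReal (1 / q) *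
      ∫⁻ p in unitSq, ENNReal.ofReal (tpDensity q u p.1 p.2) := rfl

lemma TPcle_eq_lintegral_tpClassicalDensity (q : ℝ) (u : ℝ → EuclideanSpace ℝ (Fin n)) :
    TPcle q u = ENNReal.ofReal (1 / q) *
      ∫⁻ p in unitSq, ENNReal.ofReal (tpClassicalDensity q u p.1 p.2) := rfl

lemma tpDensity_eq (q : ℝ) (u : ℝ → EuclideanSpace ℝ (Fin n)) (x y : ℝ) :
    tpDensity q u x y =
      (‖deriv u y‖ * ‖projPerp (deriv u y) (u x - u y)‖) ^ q / ‖u x - u y‖ ^ (2 * q) := by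
  rw [tpDensity, wedgeSq_rpow_half]

lemma tpDensity_nonneg (q : ℝ) (u : ℝ → EuclideanSpace ℝ (Fin n)) (x y : ℝ) :
    0 ≤ tpDensity q u x y := by
  rw [tpDensity_eq]
  positivity

lemma tpDensity_self (hq : q ≠ 0) (u : ℝ → EuclideanSpace ℝ (Fin n)) (x : ℝ) :
    tpDensity q u x x = 0 := by
  simp [tpDensity, Real.zero_rpow, hq]

lemma measurable_tpDensity (hu : ContDiff ℝ 1 u) (q : ℝ) :
    Measurable (Function.uncurry (tpDensity q u)) := by
  have : Continuous (deriv u) := hu.continuous_deriv le_rfl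
  have hwedge : Measurable fun p : ℝ × ℝ => wedgeSq (deriv u p.2) (u p.1 - u p.2) :=
    Continuous.measurable (by unfold wedgeSq; fun_prop)
  have hnorm : Measurable fun p : ℝ × ℝ => ‖u p.1 - u p.2‖ :=
    Continuous.measurable (by have := hu.continuous; fun_prop)
  exact (hwedge.pow_const _).div (hnorm.pow_const _)

lemma tpDensity_le (hq : 0 ≤ q) (hbil : bil u < ⊤) {x y : ℝ} (hxy : circDist x y ≠ 0) (c : ℝ) :
    tpDensity q u x y ≤ (bil u).toReal ^ (2 * q) * ‖deriv u y‖ ^ q *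
      (‖u x - u y - c • deriv u y‖ ^ q / circDist x y ^ (2 * q)) := by
  have hr : 0 < circDist x y := (norm_nonneg _).lt_of_ne' hxy
  rw [tpDensity_eq, mul_div_assoc', le_div_iff₀ (by positivity)]
  calc (‖deriv u y‖ * ‖projPerp (deriv u y) (u x - u y)‖) ^ q / ‖u x - u y‖ ^ (2 * q) *
        circDist x y ^ (2 * q)
      = (circDist x y / ‖u x - u y‖) ^ (2 * q) *
          (‖deriv u y‖ * ‖projPerp (deriv u y) (u x - u y)‖) ^ q := by
        rw [Real.div_rpow hr.le (norm_nonneg _)]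
        ring
    _ ≤ (bil u).toReal ^ (2 * q) * (‖deriv u y‖ * ‖u x - u y - c • deriv u y‖) ^ q := by
        gcongr
        · exact circDist_div_norm_sub_le_bil hbil hxy
        · exact norm_projPerp_le _ _ c
    _ = _ := by rw [Real.mul_rpow (norm_nonneg _) (norm_nonneg _), mul_assoc]

lemma tpDensity_add_left_le (hq : 0 < q) (hbil : bil u < ⊤) (hup : ∀ x, ‖deriv u x‖ ≤ Λ)
    (y : ℝ) {h : ℝ} (hh : h ∈ Ioc (-(1 / 2) : ℝ) (1 / 2)) :
    tpDensity q u (y + h) y ≤ (bil u).toReal ^ (2 * q) * Λ ^ q *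
      (‖u (y + h) - u y - h • deriv u y‖ ^ q / |h| ^ (2 * q)) := by
  have hΛ : 0 ≤ Λ := (norm_nonneg _).trans (hup y)
  rcases eq_or_ne h 0 with rfl | h₀
  · rw [add_zero, tpDensity_self hq.ne']
    positivity
  have hdist : circDist (y + h) y ≠ 0 := by rwa [circDist_add_left hh, abs_ne_zero]
  refine (tpDensity_le hq.le hbil hdist h).trans ?_
  rw [circDist_add_left hh]
  gcongr
  exact hup y

lemma lintegral_tpDensity_le (hq : 1 ≤ q) (hu : ContDiff ℝ 1 u) (hper : Function.Periodic u 1)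
    (hbil : bil u < ⊤) (hup : ∀ x, ‖deriv u x‖ ≤ Λ) :
    ∫⁻ p in unitSq, ENNReal.ofReal (tpDensity q u p.1 p.2) ≤
      ENNReal.ofReal ((bil u).toReal ^ (2 * q) * Λ ^ q) *
        sobSemPow (1 - 1 / q) q (deriv u) := by
  have hΛ : 0 ≤ Λ := (norm_nonneg _).trans (hup 0)
  have hexp : 1 + (1 - 1 / q) * q = q := by field_simp; ring
  have hstar : StarConvex ℝ 0 (Ioc (-(1 / 2) : ℝ) (1 / 2)) :=
    (convex_Ioc _ _).starConvex (by norm_num)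
  rw [lintegral_unitSq_eq_lintegral_centered (F := fun x y => ENNReal.ofReal (tpDensity q u x y))
      (measurable_tpDensity hu q).ennreal_ofReal fun y x => by simp only [tpDensity, hper x],
    sobSemPow_eq_lintegral_centered _ _ (hu.continuous_deriv le_rfl).measurable
      (periodic_deriv hper), hexp, ← lintegral_const_mul' _ _ ENNReal.ofReal_ne_top]
  refine lintegral_mono fun y => ?_
  refine (lintegral_ofReal_le_ofReal_mul (by positivity) ?_).trans
    (mul_le_mul_right (setLIntegral_taylor_remainder_div_le hu hq y measurableSet_Ioc hstar) _)
  exact ae_restrict_of_forall_mem measurableSet_Ioc fun h hh =>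
    tpDensity_add_left_le (by linarith) hbil hup y hh

lemma TPe_le_mul_sobSemPow (hq : 1 ≤ q) (hu : ContDiff ℝ 1 u) (hper : Function.Periodic u 1)
    (hbil : bil u < ⊤) (hup : ∀ x, ‖deriv u x‖ ≤ Λ) :
    TPe q u ≤ ENNReal.ofReal (1 / q * ((bil u).toReal ^ (2 * q) * Λ ^ q)) *
      sobSemPow (1 - 1 / q) q (deriv u) := by
  rw [TPe_eq_lintegral_tpDensity, ENNReal.ofReal_mul (by positivity), mul_assoc]
  gcongr
  exact lintegral_tpDensity_le hq hu hper hbil hup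

lemma tpClassicalDensity_eq (q : ℝ) {x y : ℝ} (hy : deriv u y ≠ 0) :
    tpClassicalDensity q u x y =
      ‖deriv u x‖ * ‖deriv u y‖ ^ (1 - q) * tpDensity q u x y := by
  have hy₀ : 0 < ‖deriv u y‖ := norm_pos_iff.2 hy
  rw [tpDensity_eq, tpClassicalDensity, Real.mul_rpow (norm_nonneg _) (norm_nonneg _),
    Real.rpow_sub hy₀, Real.rpow_one]
  field_simp

lemma tpClassicalDensity_mem_Icc (hq : 1 ≤ q) (hΛ : 0 < Λ) (hlow : ∀ x, 1 / Λ ≤ ‖deriv u x‖)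
    (hup : ∀ x, ‖deriv u x‖ ≤ Λ) (x y : ℝ) :
    tpClassicalDensity q u x y ∈
      Icc ((Λ ^ q)⁻¹ * tpDensity q u x y) (Λ ^ q * tpDensity q u x y) := by
  have hy : deriv u y ≠ 0 := norm_pos_iff.1 ((one_div_pos.2 hΛ).trans_le (hlow y))
  have hratio := mul_rpow_one_sub_mem_Icc hq hΛ ⟨hlow x, hup x⟩ ⟨hlow y, hup y⟩
  rw [tpClassicalDensity_eq q hy]
  exact ⟨mul_le_mul_of_nonneg_right hratio.1 (tpDensity_nonneg q u x y),
    mul_le_mul_of_nonneg_right hratio.2 (tpDensity_nonneg q u x y)⟩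

lemma TPcle_le_mul_TPe (hq : 1 ≤ q) (hΛ : 0 < Λ) (hlow : ∀ x, 1 / Λ ≤ ‖deriv u x‖)
    (hup : ∀ x, ‖deriv u x‖ ≤ Λ) : TPcle q u ≤ ENNReal.ofReal (Λ ^ q) * TPe q u := by
  rw [TPe_eq_lintegral_tpDensity, TPcle_eq_lintegral_tpClassicalDensity, mul_left_comm]
  gcongr
  exact lintegral_ofReal_le_ofReal_mul (by positivity) <| ae_of_all _ fun p =>
    (tpClassicalDensity_mem_Icc hq hΛ hlow hup p.1 p.2).2

lemma TPe_le_mul_TPcle (hq : 1 ≤ q) (hΛ : 0 < Λ) (hlow : ∀ x, 1 / Λ ≤ ‖deriv u x‖)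
    (hup : ∀ x, ‖deriv u x‖ ≤ Λ) : TPe q u ≤ ENNReal.ofReal (Λ ^ q) * TPcle q u := by
  rw [TPe_eq_lintegral_tpDensity, TPcle_eq_lintegral_tpClassicalDensity, mul_left_comm]
  gcongr
  exact lintegral_ofReal_le_ofReal_mul (by positivity) <| ae_of_all _ fun p =>
    (inv_mul_le_iff₀ (by positivity)).1 (tpClassicalDensity_mem_Icc hq hΛ hlow hup p.1 p.2).1

lemma abs_toReal_TPcle_sub_toReal_TPe_le (hq : 1 ≤ q) (hΛ : 1 ≤ Λ)
    (hlow : ∀ x, 1 / Λ ≤ ‖deriv u x‖) (hup : ∀ x, ‖deriv u x‖ ≤ Λ) (hcl : TPcle q u ≠ ⊤)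
    (hTP : TPe q u ≠ ⊤) :
    |(TPcle q u).toReal - (TPe q u).toReal| ≤ q * Λ ^ (q - 1) * (Λ - 1) * (TPe q u).toReal := by
  have hΛ₀ : 0 < Λ := zero_lt_one.trans_le hΛ
  calc |(TPcle q u).toReal - (TPe q u).toReal|
      ≤ (Λ ^ q - 1) * (TPe q u).toReal :=
        abs_toReal_sub_toReal_le (Real.one_le_rpow hΛ (by linarith)) hcl hTP
          (TPcle_le_mul_TPe hq hΛ₀ hlow hup) (TPe_le_mul_TPcle hq hΛ₀ hlow hup)
    _ ≤ q * Λ ^ (q - 1) * (Λ - 1) * (TPe q u).toReal := by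
        gcongr
        exact rpow_sub_one_le_mul_sub_one hq hΛ₀

end TangentPoint

theorem tp_classical_approximation_general {n : ℕ} {q Λ : ℝ} (hq : 1 ≤ q) (hΛ : 1 ≤ Λ)
    {u : ℝ → EuclideanSpace ℝ (Fin n)} (hC1 : ContDiff ℝ 1 u) (hper : Function.Periodic u 1)
    (hbil : bil u < ⊤) (hsem : sobSemPow (1 - 1 / q) q (deriv u) < ⊤)
    (hlow : ∀ x, 1 / Λ ≤ ‖deriv u x‖) (hup : ∀ x, ‖deriv u x‖ ≤ Λ) :
    TPcle q u ≠ ⊤ ∧ TPe q u ≠ ⊤ ∧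
      |(TPcle q u).toReal - (TPe q u).toReal| ≤
        (bil u).toReal ^ (2 * q) * Λ ^ (2 * q) *
          (sobSemPow (1 - 1 / q) q (deriv u)).toReal * (Λ - 1) := by
  have hΛ₀ : 0 < Λ := zero_lt_one.trans_le hΛ
  have : 0 ≤ Λ - 1 := sub_nonneg.2 hΛ
  set S := sobSemPow (1 - 1 / q) q (deriv u)
  set B := (bil u).toReal
  set C := 1 / q * (B ^ (2 * q) * Λ ^ q) with hC
  have hTP : TPe q u ≤ ENNReal.ofReal C * S := TPe_le_mul_sobSemPow hq hC1 hper hbil hup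
  have hbound : ENNReal.ofReal C * S ≠ ⊤ := ENNReal.mul_ne_top ENNReal.ofReal_ne_top hsem.ne
  have hTP_fin : TPe q u ≠ ⊤ := ne_top_of_le_ne_top hbound hTP
  have hcl_fin : TPcle q u ≠ ⊤ := ne_top_of_le_ne_top
    (ENNReal.mul_ne_top ENNReal.ofReal_ne_top hTP_fin) (TPcle_le_mul_TPe hq hΛ₀ hlow hup)
  have hTP_real : (TPe q u).toReal ≤ C * S.toReal := by
    simpa [show 0 ≤ C by positivity] using ENNReal.toReal_mono hbound hTP
  refine ⟨hcl_fin, hTP_fin, ?_⟩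
  calc |(TPcle q u).toReal - (TPe q u).toReal|
      ≤ q * Λ ^ (q - 1) * (Λ - 1) * (TPe q u).toReal :=
        abs_toReal_TPcle_sub_toReal_TPe_le hq hΛ hlow hup hcl_fin hTP_fin
    _ ≤ q * Λ ^ (q - 1) * (Λ - 1) * (C * S.toReal) := by gcongr
    _ = B ^ (2 * q) * Λ ^ (2 * q - 1) * S.toReal * (Λ - 1) := by
        rw [hC, two_mul q, add_sub_assoc, Real.rpow_add hΛ₀]
        field_simp
    _ ≤ B ^ (2 * q) * Λ ^ (2 * q) * S.toReal * (Λ - 1) := by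
        gcongr
        linarith

/-- Approximation, Proposition 3.5: the classical tangent-point
functional and the variant `TP` differ by at most
`(bil u)^{2q} Λ^{2q} [u']_{W^{1-1/q,q}}^q (Λ - 1)`
whenever `1/Λ ≤ |u'| ≤ Λ`. -/
theorem tp_classical_approximation (n : ℕ) (q Λ : ℝ) (hq : 2 < q) (hΛ : 1 ≤ Λ)
    (u : ℝ → EuclideanSpace ℝ (Fin n))
    (hC1 : ContDiff ℝ 1 u) (hper : Function.Periodic u 1)
    (hemb : Embedded u) (hreg : Regular u)
    (hbil : bil u < ⊤) (hsem : sobSemPow (1 - 1 / q) q (deriv u) < ⊤)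
    (hlow : ∀ x, 1 / Λ ≤ ‖deriv u x‖) (hup : ∀ x, ‖deriv u x‖ ≤ Λ) :
    TPcle q u ≠ ⊤ ∧ TPe q u ≠ ⊤ ∧
      |(TPcle q u).toReal - (TPe q u).toReal| ≤
        (bil u).toReal ^ (2 * q) * Λ ^ (2 * q) *
          (sobSemPow (1 - 1 / q) q (deriv u)).toReal * (Λ - 1) :=
  tp_classical_approximation_general (by linarith) hΛ hC1 hper hbil hsem hlow hup
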